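/- arXiv:1802.08309 — 2 statements merged into one kernel-verified Lean document; each statement's English description precedes it below -/
import Mathlib

section
/- Let ℬ ⊆ ℕ be a primitive set, H the closure of the image of the diagonal embedding Δ : ℤ → ∏_{b∈ℬ} ℤ/bℤ with normalized Haar measure m_H, and ℬ' ⊆ ℬ. Then m_H(W_{ℬ'}) = 1 − δ(M_{ℬ'}), where W_{ℬ'} := {h ∈ H : h_b ≠ 0 for all b ∈ ℬ'}. -/
open Filter Set Topology MeasureTheory

open scoped Classical

noncomputable section

/-- The diagonal embedding `Δ : ℤ → ∏_{b ∈ B} ℤ/bℤ`. -/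
def diagEmb (B : Set ℕ) : ℤ →+ ((b : B) → ZMod b) where
  toFun n := fun b => (n : ZMod b)
  map_zero' := by ext b; simp
  map_add' m n := by ext b; simp [Int.cast_add]

/-- `H`, the topological closure of `Δ(ℤ)`, as a (closed) subgroup of `∏_{b ∈ B} ℤ/bℤ`. -/
def Hgrp (B : Set ℕ) : AddSubgroup ((b : B) → ZMod b) :=
  (diagEmb B).range.topologicalClosure

instance (B : Set ℕ) [∀ b : B, NeZero (b : ℕ)] : CompactSpace (Hgrp B) :=
  isCompact_iff_compactSpace.mp ((AddSubgroup.isClosed_topologicalClosure _).isCompact)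

instance (B : Set ℕ) : MeasurableSpace (Hgrp B) := borel _

instance (B : Set ℕ) : BorelSpace (Hgrp B) := ⟨rfl⟩

/-- The normalized Haar measure `m_H` on the compact abelian group `H`. -/
def mH (B : Set ℕ) [∀ b : B, NeZero (b : ℕ)] : Measure (Hgrp B) :=
  Measure.addHaarMeasure ⊤

/-- The window `W_{B'} ⊆ H` determined by a subset `B' ⊆ B`. -/
def Wset (B : Set ℕ) (B' : Set ℕ) : Set (Hgrp B) :=
  {h | ∀ b : B, (b : ℕ) ∈ B' → (h : (b : B) → ZMod b) b ≠ 0}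

/-- The set of multiples `M_B ⊆ ℤ` of a set `B ⊆ ℕ`. -/
def multiplesZ (B : Set ℕ) : Set ℤ := {n : ℤ | ∃ b ∈ B, (b : ℤ) ∣ n}

/-- The `B`-free integers `F_B = ℤ ∖ M_B`. -/
def freeZ (B : Set ℕ) : Set ℤ := (multiplesZ B)ᶜ

/-- The logarithmically weighted averages `(1/log n) ∑_{k=1}^n 1_A(k)/k`. -/
def logWeight (A : Set ℤ) (n : ℕ) : ℝ :=
  (Real.log n)⁻¹ * ∑ k ∈ Finset.Icc 1 n, A.indicator (fun m : ℤ => ((m : ℝ))⁻¹) (k : ℤ)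

/-- The lower logarithmic density of a set `A ⊆ ℤ`. -/
def logDensLow (A : Set ℤ) : ℝ := liminf (logWeight A) atTop

/-- `A ⊆ ℤ` has logarithmic density `d`. -/
def HasLogDensity (A : Set ℤ) (d : ℝ) : Prop := Tendsto (logWeight A) atTop (𝓝 d)

/-- `B` is primitive: no element divides another one. -/
def Primitive (B : Set ℕ) : Prop := ∀ b ∈ B, ∀ b' ∈ B, b ∣ b' → b = b'

/-- `B` is Behrend: its set of multiples has logarithmic density one. -/
def IsBehrend (B : Set ℕ) : Prop := logDensLow (multiplesZ B) = 1

/-- `B` is taut: removing any element strictly decreases the logarithmic density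
of the set of multiples. -/
def IsTaut (B : Set ℕ) : Prop :=
  ∀ b ∈ B, logDensLow (multiplesZ (B \ {b})) < logDensLow (multiplesZ B)

/-- `B̃^(N)`: the elements of `B` having no prime factor `≤ N`. -/
def Btilde (B : Set ℕ) (N : ℕ) : Set ℕ := {b ∈ B | ∀ p : ℕ, p.Prime → p ∣ b → N < p}

/-- `B^(N)`: the elements of `B` all of whose prime factors are `≤ N`. -/
def Bsmooth (B : Set ℕ) (N : ℕ) : Set ℕ := {b ∈ B | ∀ p : ℕ, p.Prime → p ∣ b → p ≤ N}

/-! ### A nonnegative function whose divisor sums are `n ^ u` -/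

def powAF (u : ℝ) : ArithmeticFunction ℝ := ⟨fun n => if n = 0 then 0 else (n : ℝ) ^ u, by simp⟩

lemma powAF_mult (u : ℝ) : (powAF u).IsMultiplicative := by
  refine ArithmeticFunction.IsMultiplicative.iff_ne_zero.2 ⟨?_, ?_⟩
  · simp [powAF]
  · intro m n hm hn _
    simp [powAF, hm, hn, Real.mul_rpow]

def gAF (u : ℝ) : ArithmeticFunction ℝ :=
  powAF u * ((ArithmeticFunction.moebius : ArithmeticFunction ℤ) : ArithmeticFunction ℝ)

lemma gAF_mult (u : ℝ) : (gAF u).IsMultiplicative :=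
  (powAF_mult u).mul ArithmeticFunction.isMultiplicative_moebius.intCast

lemma gAF_sum (u : ℝ) (n : ℕ) (hn : n ≠ 0) : ∑ d ∈ n.divisors, gAF u d = (n : ℝ) ^ u := by
  rw [← ArithmeticFunction.coe_mul_zeta_apply, gAF, mul_assoc,
    ArithmeticFunction.coe_moebius_mul_coe_zeta, mul_one]
  simp [powAF, hn]

lemma gAF_nonneg (u : ℝ) (hu : 0 ≤ u) (n : ℕ) : 0 ≤ gAF u n := by
  by_cases hn : n = 0
  · simp [hn]
  rw [(gAF_mult u).multiplicative_factorization _ hn]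
  refine Finset.prod_nonneg fun p hp => ?_
  have pp : p.Prime := Nat.prime_of_mem_primeFactors (by simpa using hp)
  generalize n.factorization p = k
  cases k with
  | zero => simp [(gAF_mult u).1]
  | succ k =>
    have h1 := gAF_sum u (p ^ (k + 1)) (pow_ne_zero _ pp.ne_zero)
    have h2 := gAF_sum u (p ^ k) (pow_ne_zero _ pp.ne_zero)
    rw [Nat.sum_divisors_prime_pow pp] at h1 h2
    rw [Finset.sum_range_succ, h2] at h1
    have h3 : ((p ^ k : ℕ) : ℝ) ^ u ≤ ((p ^ (k + 1) : ℕ) : ℝ) ^ u := by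
      apply Real.rpow_le_rpow (by positivity) _ hu
      exact_mod_cast Nat.pow_le_pow_right pp.pos (Nat.le_succ k)
    linarith

/-! ### Zeta sums over sets -/

def zz (s : ℝ) (A : Set ℕ) : ℝ := ∑' n : ℕ, A.indicator (fun n : ℕ => (n : ℝ) ^ (-s)) n

lemma zz_summable (s : ℝ) (hs : 1 < s) (A : Set ℕ) :
    Summable (A.indicator (fun n : ℕ => (n : ℝ) ^ (-s))) :=
  (Real.summable_nat_rpow.2 (by linarith)).indicator A

lemma zz_term_nonneg (s : ℝ) (A : Set ℕ) (n : ℕ) :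
    0 ≤ A.indicator (fun n : ℕ => (n : ℝ) ^ (-s)) n :=
  Set.indicator_nonneg (fun _ _ => by positivity) _

lemma zz_nonneg (s : ℝ) (A : Set ℕ) : 0 ≤ zz s A := tsum_nonneg (zz_term_nonneg s A)

def ze (s : ℝ) (A : Set ℕ) : ENNReal :=
  ∑' n : ℕ, ENNReal.ofReal (A.indicator (fun n : ℕ => (n : ℝ) ^ (-s)) n)

lemma ze_eq (s : ℝ) (hs : 1 < s) (A : Set ℕ) : ze s A = ENNReal.ofReal (zz s A) :=
  (ENNReal.ofReal_tsum_of_nonneg (zz_term_nonneg s A) (zz_summable s hs A)).symm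

lemma ze_conv (s t : ℝ) (hs : 1 < s) (hst : s ≤ t) (A : Set ℕ) :
    ze s A = ∑' d : ℕ, ENNReal.ofReal (gAF (t - s) d * (d : ℝ) ^ (-t)) *
      ze t {m | d * m ∈ A} := by
  have hu : 0 ≤ t - s := by linarith
  have h1 : ∀ n : ℕ, ENNReal.ofReal (A.indicator (fun n : ℕ => (n : ℝ) ^ (-s)) n)
      = ∑' d : ℕ, if d ∣ n then ENNReal.ofReal (gAF (t - s) d) *
        ENNReal.ofReal (A.indicator (fun n : ℕ => (n : ℝ) ^ (-t)) n) else 0 := by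
    intro n
    by_cases hn : n = 0
    · subst hn
      have e1 : A.indicator (fun n : ℕ => (n : ℝ) ^ (-s)) 0 = 0 := by
        rw [Set.indicator_apply]; simp [Real.zero_rpow (by linarith : -s ≠ 0)]
      have e2 : A.indicator (fun n : ℕ => (n : ℝ) ^ (-t)) 0 = 0 := by
        rw [Set.indicator_apply]; simp [Real.zero_rpow (by linarith : -t ≠ 0)]
      rw [e1, e2]; simp
    · rw [tsum_eq_sum (s := n.divisors)]
      · rw [Finset.sum_congr rfl (g := fun d => ENNReal.ofReal (gAF (t - s) d) *
          ENNReal.ofReal (A.indicator (fun n : ℕ => (n : ℝ) ^ (-t)) n))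
          (fun d hd => if_pos (Nat.dvd_of_mem_divisors hd)), ← Finset.sum_mul,
          ← ENNReal.ofReal_sum_of_nonneg (fun d _ => gAF_nonneg _ hu d), gAF_sum _ _ hn,
          ← ENNReal.ofReal_mul (by positivity)]
        congr 1
        by_cases hA : n ∈ A
        · simp only [Set.indicator_of_mem hA]
          rw [← Real.rpow_add (by positivity)]
          congr 1; ring
        · simp [Set.indicator_of_notMem hA]
      · intro d hd
        rw [if_neg]
        intro h
        exact hd (Nat.mem_divisors.2 ⟨h, hn⟩)
  unfold ze
  rw [tsum_congr h1, ENNReal.tsum_comm]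
  refine tsum_congr fun d => ?_
  by_cases hd : d = 0
  · subst hd; simp
  have hinj : Function.Injective (fun m : ℕ => d * m) := fun a b h =>
    Nat.eq_of_mul_eq_mul_left (Nat.pos_of_ne_zero hd) h
  rw [← hinj.tsum_eq, ← ENNReal.tsum_mul_left]
  · refine tsum_congr fun m => ?_
    rw [if_pos (dvd_mul_right d m), ENNReal.ofReal_mul (gAF_nonneg _ hu d), mul_assoc,
      ← ENNReal.ofReal_mul (p := (d : ℝ) ^ (-t)) (by positivity)]
    congr 2
    by_cases hA : d * m ∈ A
    · rw [Set.indicator_of_mem hA, Set.indicator_of_mem (by exact hA)]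
      push_cast
      rw [Real.mul_rpow (by positivity) (by positivity)]
    · rw [Set.indicator_of_notMem hA, Set.indicator_of_notMem (by exact hA), mul_zero]
  · intro n hn
    by_contra h
    apply hn
    show (if d ∣ n then _ else _) = _
    rw [if_neg]
    rintro ⟨m, rfl⟩
    exact h ⟨m, rfl⟩

lemma zz_mono (s t : ℝ) (hs : 1 < s) (hst : s ≤ t) (A : Set ℕ)
    (hA : ∀ d m : ℕ, m ∈ A → d * m ∈ A) :
    zz t A * zz s univ ≤ zz s A * zz t univ := by
  have ht : 1 < t := by linarith
  have key : ze t A * ze s univ ≤ ze s A * ze t univ := by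
    rw [ze_conv s t hs hst univ, ze_conv s t hs hst A]
    simp only [mem_univ, ofPred_true]
    rw [ENNReal.tsum_mul_right, ← mul_assoc]
    gcongr
    rw [mul_comm, ← ENNReal.tsum_mul_right]
    refine ENNReal.tsum_le_tsum fun d => ?_
    gcongr
    unfold ze
    refine ENNReal.tsum_le_tsum fun m => ?_
    apply ENNReal.ofReal_le_ofReal
    apply Set.indicator_le_indicator_of_subset
    · intro m hm; exact hA d m hm
    · intro _; positivity
  rw [ze_eq s hs, ze_eq t ht, ze_eq s hs, ze_eq t ht, ← ENNReal.ofReal_mul (zz_nonneg _ _),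
    ← ENNReal.ofReal_mul (zz_nonneg _ _)] at key
  exact (ENNReal.ofReal_le_ofReal_iff (mul_nonneg (zz_nonneg _ _) (zz_nonneg _ _))).1 key

lemma zz_unbounded (K t : ℝ) (ht : 1 < t) : ∃ s, 1 < s ∧ s < t ∧ K < zz s univ := by
  have h1 : ∀ᶠ s : ℝ in 𝓝[>] 1, 1 / 2 < (s - 1) * ∑' (n : ℕ), 1 / (n : ℝ) ^ s :=
    tendsto_sub_mul_tsum_nat_rpow.eventually (lt_mem_nhds (by norm_num))
  have h2 : ∀ᶠ s : ℝ in 𝓝[>] 1, s ∈ Ioo 1 (min t (1 + 1 / (2 * (|K| + 1)))) :=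
    Ioo_mem_nhdsGT (lt_min ht (by simp; positivity))
  obtain ⟨s, h1, h2, h3⟩ := (h1.and h2).exists
  refine ⟨s, h2, lt_of_lt_of_le h3 (min_le_left _ _), ?_⟩
  have h4 : s - 1 < 1 / (2 * (|K| + 1)) := by
    have := lt_of_lt_of_le h3 (min_le_right _ _); linarith
  have h5 : ∑' (n : ℕ), 1 / (n : ℝ) ^ s = zz s univ := by
    unfold zz
    refine tsum_congr fun n => ?_
    simp [Real.rpow_neg]
  rw [h5] at h1
  by_contra hc
  have h6 : zz s univ ≤ |K| + 1 := by
    have := le_abs_self K; linarith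
  have h7 : (s - 1) * zz s univ ≤ 1 / (2 * (|K| + 1)) * (|K| + 1) :=
    mul_le_mul h4.le h6 (zz_nonneg _ _) (by positivity)
  have h8 : 1 / (2 * (|K| + 1)) * (|K| + 1) = 1 / 2 := by
    have : |K| + 1 ≠ 0 := by positivity
    field_simp
  linarith

lemma zz_tendsto (s : ℝ) (hs : 1 < s) (A : Set ℕ) :
    Tendsto (fun n => ∑ k ∈ Finset.range n,
      A.indicator (fun n : ℕ => (n : ℝ) ^ (-s)) (k + 1)) atTop (𝓝 (zz s A)) := by
  have h := (zz_summable s hs A).hasSum.tendsto_sum_nat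
  have h' := h.comp (tendsto_add_atTop_nat 1)
  refine h'.congr fun n => ?_
  simp only [Function.comp]
  rw [Finset.sum_range_succ']
  have e1 : A.indicator (fun n : ℕ => (n : ℝ) ^ (-s)) 0 = 0 := by
    rw [Set.indicator_apply]; simp [Real.zero_rpow (by linarith : -s ≠ 0)]
  rw [e1, add_zero]

/-! ### Periodic functions against monotone weights -/

lemma shift_one (f w : ℕ → ℝ) (hf0 : ∀ k, 0 ≤ f k) (hf1 : ∀ k, f k ≤ 1) (hw : Antitone w)
    (hw0 : ∀ k, 0 ≤ w k) (hw1 : w 0 ≤ 1) (n : ℕ) :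
    |∑ k ∈ Finset.range n, f (k + 1) * w k - ∑ k ∈ Finset.range n, f k * w k| ≤ 1 := by
  have h : ∀ n, f n * w n - f 0 * w 0 ≤
        ∑ k ∈ Finset.range n, f (k + 1) * w k - ∑ k ∈ Finset.range n, f k * w k ∧
      ∑ k ∈ Finset.range n, f (k + 1) * w k - ∑ k ∈ Finset.range n, f k * w k ≤
        w 0 - w n + f n * w n - f 0 * w 0 := by
    intro n
    induction n with
    | zero => simp
    | succ n ih =>
      rw [Finset.sum_range_succ, Finset.sum_range_succ]
      have h1 : w (n + 1) ≤ w n := hw (Nat.le_succ n)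
      have h2 := mul_le_mul_of_nonneg_left h1 (hf0 (n + 1))
      have h3 : f (n + 1) * (w n - w (n + 1)) ≤ 1 * (w n - w (n + 1)) :=
        mul_le_mul_of_nonneg_right (hf1 _) (by linarith)
      constructor <;> nlinarith [ih.1, ih.2]
  obtain ⟨h1, h2⟩ := h n
  have a1 := mul_nonneg (hf0 n) (hw0 n)
  have a2 := mul_nonneg (hf0 0) (hw0 0)
  have a3 : f n * w n ≤ 1 * w n := mul_le_mul_of_nonneg_right (hf1 _) (hw0 n)
  have a4 : f 0 * w 0 ≤ 1 * w 0 := mul_le_mul_of_nonneg_right (hf1 _) (hw0 0)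
  rw [abs_le]; constructor <;> linarith

lemma shift_many (f w : ℕ → ℝ) (hf0 : ∀ k, 0 ≤ f k) (hf1 : ∀ k, f k ≤ 1) (hw : Antitone w)
    (hw0 : ∀ k, 0 ≤ w k) (hw1 : w 0 ≤ 1) (n j : ℕ) :
    |∑ k ∈ Finset.range n, f (k + j) * w k - ∑ k ∈ Finset.range n, f k * w k| ≤ j := by
  induction j with
  | zero => simp
  | succ j ih =>
    have h := shift_one (fun k => f (k + j)) w (fun k => hf0 _) (fun k => hf1 _) hw hw0 hw1 n
    have e : ∀ k, k + 1 + j = k + (j + 1) := fun k => by ring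
    simp only [e] at h
    push_cast
    rw [abs_le] at *
    constructor <;> linarith [ih.1, ih.2, h.1, h.2]

lemma sum_period (f : ℕ → ℝ) (L : ℕ) (hp : ∀ k, f (k + L) = f k) (k : ℕ) :
    ∑ j ∈ Finset.range L, f (k + j) = ∑ j ∈ Finset.range L, f j := by
  induction k with
  | zero => simp
  | succ k ih =>
    rw [← ih]
    have h1 := Finset.sum_range_succ (fun j => f (k + j)) L
    have h2 := Finset.sum_range_succ' (fun j => f (k + j)) L
    rw [h1, add_zero, hp] at h2
    have e : ∀ j, k + 1 + j = k + (j + 1) := fun j => by ring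
    simp only [e]
    linarith

lemma periodic_bound (f w : ℕ → ℝ) (hf0 : ∀ k, 0 ≤ f k) (hf1 : ∀ k, f k ≤ 1) (hw : Antitone w)
    (hw0 : ∀ k, 0 ≤ w k) (hw1 : w 0 ≤ 1) (L : ℕ) (hp : ∀ k, f (k + L) = f k) (n : ℕ) :
    |(∑ j ∈ Finset.range L, f j) * ∑ k ∈ Finset.range n, w k
      - L * ∑ k ∈ Finset.range n, f k * w k| ≤ L * L := by
  have e : (∑ j ∈ Finset.range L, f j) * ∑ k ∈ Finset.range n, w k
      - L * ∑ k ∈ Finset.range n, f k * w k = ∑ j ∈ Finset.range L,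
      (∑ k ∈ Finset.range n, f (k + j) * w k - ∑ k ∈ Finset.range n, f k * w k) := by
    rw [Finset.sum_sub_distrib, Finset.sum_const, Finset.card_range, nsmul_eq_mul,
      Finset.sum_comm, Finset.mul_sum]
    congr 1
    refine Finset.sum_congr rfl fun k _ => ?_
    rw [← Finset.sum_mul, sum_period f L hp]
  rw [e]
  refine (Finset.abs_sum_le_sum_abs _ _).trans ?_
  refine (Finset.sum_le_card_nsmul _ _ (L : ℝ) ?_).trans ?_
  · intro j hj
    refine (shift_many f w hf0 hf1 hw hw0 hw1 n j).trans ?_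
    exact_mod_cast (Finset.mem_range.1 hj).le
  · simp

lemma abel_lower (t v : ℕ → ℝ) (K : ℝ) (hT : ∀ n, -K ≤ ∑ k ∈ Finset.range n, t k)
    (hv : Antitone v) (hv0 : ∀ k, 0 ≤ v k) (n : ℕ) :
    -K * v 0 ≤ ∑ k ∈ Finset.range n, t k * v k := by
  have h : ∀ n, (∑ k ∈ Finset.range n, t k + K) * v n - K * v 0 ≤
      ∑ k ∈ Finset.range n, t k * v k := by
    intro n
    induction n with
    | zero => simp
    | succ n ih =>
      rw [Finset.sum_range_succ (fun k => t k * v k)]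
      have h2 : (∑ k ∈ Finset.range (n + 1), t k + K) * v (n + 1) ≤
          (∑ k ∈ Finset.range (n + 1), t k + K) * v n :=
        mul_le_mul_of_nonneg_left (hv (Nat.le_succ n)) (by linarith [hT (n + 1)])
      rw [Finset.sum_range_succ] at h2 ⊢
      nlinarith
  have := h n
  have h3 : 0 ≤ (∑ k ∈ Finset.range n, t k + K) * v n :=
    mul_nonneg (by linarith [hT n]) (hv0 n)
  linarith

/-! ### Logarithmic density -/

def chi (A : Set ℕ) (k : ℕ) : ℝ := A.indicator (fun _ => (1 : ℝ)) k

lemma chi_nonneg (A : Set ℕ) (k : ℕ) : 0 ≤ chi A k :=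
  Set.indicator_nonneg (fun _ _ => zero_le_one) _

lemma chi_le_one (A : Set ℕ) (k : ℕ) : chi A k ≤ 1 := by
  unfold chi; rw [Set.indicator_apply]; split_ifs <;> norm_num

lemma zterm_eq (s : ℝ) (A : Set ℕ) (k : ℕ) :
    A.indicator (fun n : ℕ => (n : ℝ) ^ (-s)) k = chi A k * (k : ℝ) ^ (-s) := by
  unfold chi; rw [Set.indicator_apply, Set.indicator_apply]; split_ifs <;> simp

lemma rpow_weight_anti (s : ℝ) (hs : 0 ≤ s) :
    Antitone (fun k : ℕ => ((k + 1 : ℕ) : ℝ) ^ (-s)) := by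
  intro a b hab
  apply Real.rpow_le_rpow_of_nonpos (by positivity) _ (by linarith)
  exact_mod_cast Nat.succ_le_succ hab

lemma sum_period' (f : ℕ → ℝ) (L : ℕ) (hp : ∀ k, f (k + L) = f k) :
    ∑ j ∈ Finset.range L, f (j + 1) = ∑ j ∈ Finset.range L, f j := by
  rw [← sum_period f L hp 1]
  exact Finset.sum_congr rfl fun j _ => by rw [add_comm]

lemma zz_le_of_periodic (A : Set ℕ) (hA : ∀ d m : ℕ, m ∈ A → d * m ∈ A) (L : ℕ) (hL : 0 < L)
    (hp : ∀ k, chi A (k + L) = chi A k) (d : ℝ)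
    (hd : L * d = ∑ j ∈ Finset.range L, chi A j) (t : ℝ) (ht : 1 < t) :
    zz t A ≤ d * zz t univ := by
  have hL' : (0 : ℝ) < L := by exact_mod_cast hL
  have h1 : ∀ s, 1 < s → zz s A ≤ d * zz s univ + L := by
    intro s hs
    have h : ∀ n, ∑ k ∈ Finset.range n, A.indicator (fun n : ℕ => (n : ℝ) ^ (-s)) (k + 1) ≤
        d * (∑ k ∈ Finset.range n,
          (univ : Set ℕ).indicator (fun n : ℕ => (n : ℝ) ^ (-s)) (k + 1)) + L := by
      intro n
      have hb := periodic_bound (fun k => chi A (k + 1)) (fun k : ℕ => ((k + 1 : ℕ) : ℝ) ^ (-s))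
        (fun k => chi_nonneg _ _) (fun k => chi_le_one _ _) (rpow_weight_anti s (by linarith))
        (fun k => by positivity) (by simp) L
        (fun k => by rw [← hp (k + 1)]; congr 1; ring) n
      rw [sum_period' _ L hp, ← hd] at hb
      simp only [zterm_eq s A, Set.indicator_univ]
      have := (abs_le.1 hb).1
      refine le_of_mul_le_mul_left ?_ hL'
      linarith
    exact le_of_tendsto_of_tendsto' (zz_tendsto s hs A)
      (((zz_tendsto s hs univ).const_mul d).add_const _) h
  by_contra hc
  push Not at hc
  set ε := zz t A - d * zz t univ with hε
  have hε0 : 0 < ε := by linarith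
  obtain ⟨s, hs, hst, hK⟩ := zz_unbounded (L * zz t univ / ε) t ht
  have h2 := zz_mono s t hs hst.le A hA
  have h3 := mul_le_mul_of_nonneg_right (h1 s hs) (zz_nonneg t univ)
  rw [div_lt_iff₀ hε0] at hK
  rw [hε] at hK
  nlinarith

lemma logWeight_eq (M : Set ℤ) (n : ℕ) : logWeight M n = (Real.log n)⁻¹ *
    ∑ k ∈ Finset.range n, chi {m : ℕ | (m : ℤ) ∈ M} (k + 1) * ((k + 1 : ℕ) : ℝ)⁻¹ := by
  unfold logWeight
  congr 1
  induction n with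
  | zero => simp
  | succ n ih =>
    rw [Finset.sum_Icc_succ_top (by omega), ih, Finset.sum_range_succ]
    congr 1
    unfold chi
    rw [Set.indicator_apply, Set.indicator_apply]
    simp only [mem_ofPred_eq]
    split_ifs <;> simp

lemma harm_eq (n : ℕ) : ∑ k ∈ Finset.range n, ((k + 1 : ℕ) : ℝ)⁻¹ = (harmonic n : ℝ) := by
  simp [harmonic]

lemma tendsto_log_nat : Tendsto (fun n : ℕ => Real.log n) atTop atTop :=
  Real.tendsto_log_atTop.comp tendsto_natCast_atTop_atTop

lemma harm_tendsto :
    Tendsto (fun n : ℕ => (Real.log n)⁻¹ * (harmonic n : ℝ)) atTop (𝓝 1) := by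
  have h1 := (tendsto_log_nat.inv_tendsto_atTop).mul Real.tendsto_harmonic_sub_log
  rw [zero_mul] at h1
  have h2 := h1.add_const 1
  rw [zero_add] at h2
  refine h2.congr' ?_
  filter_upwards [tendsto_log_nat.eventually_gt_atTop 0] with n hn
  simp only [Pi.inv_apply]
  field_simp
  ring

lemma logWeight_tendsto_of_periodic (M : Set ℤ) (L : ℕ) (hL : 0 < L)
    (hp : ∀ k, chi {m : ℕ | (m : ℤ) ∈ M} (k + L) = chi {m : ℕ | (m : ℤ) ∈ M} k) (d : ℝ)
    (hd : L * d = ∑ j ∈ Finset.range L, chi {m : ℕ | (m : ℤ) ∈ M} j) :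
    Tendsto (logWeight M) atTop (𝓝 d) := by
  have hL' : (0 : ℝ) < L := by exact_mod_cast hL
  set A := {m : ℕ | (m : ℤ) ∈ M}
  have h0 : Tendsto (fun n : ℕ => (Real.log n)⁻¹ * L) atTop (𝓝 0) := by
    simpa using (tendsto_log_nat.inv_tendsto_atTop).mul_const (L : ℝ)
  have hm := harm_tendsto.const_mul d
  rw [mul_one] at hm
  have hb : ∀ n : ℕ, |d * (harmonic n : ℝ) -
      ∑ k ∈ Finset.range n, chi A (k + 1) * ((k + 1 : ℕ) : ℝ)⁻¹| ≤ L := by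
    intro n
    have hb := periodic_bound (fun k => chi A (k + 1)) (fun k : ℕ => ((k + 1 : ℕ) : ℝ)⁻¹)
        (fun k => chi_nonneg _ _) (fun k => chi_le_one _ _)
        (by simpa only [Real.rpow_neg_one] using rpow_weight_anti 1 (by norm_num))
        (fun k => by positivity) (by simp) L
        (fun k => by rw [← hp (k + 1)]; congr 1; ring) n
    rw [sum_period' _ L hp, ← hd, harm_eq, mul_assoc, ← mul_sub, abs_mul, abs_of_pos hL'] at hb
    exact le_of_mul_le_mul_left hb hL'
  have hdiff : Tendsto (fun n : ℕ => d * ((Real.log n)⁻¹ * (harmonic n : ℝ)) - logWeight M n)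
      atTop (𝓝 0) := by
    refine squeeze_zero_norm' ?_ h0
    filter_upwards [tendsto_log_nat.eventually_gt_atTop 0] with n hn
    rw [logWeight_eq, mul_left_comm, ← mul_sub, Real.norm_eq_abs, abs_mul,
      abs_of_pos (inv_pos.2 hn)]
    exact mul_le_mul_of_nonneg_left (hb n) (inv_pos.2 hn).le
  simpa using hm.sub hdiff

lemma logWeight_nonneg (M : Set ℤ) (n : ℕ) : 0 ≤ logWeight M n := by
  rw [logWeight_eq]
  refine mul_nonneg (inv_nonneg.2 (Real.log_natCast_nonneg n)) (Finset.sum_nonneg fun k _ => ?_)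
  exact mul_nonneg (chi_nonneg _ _) (by positivity)

lemma logWeight_mono {M M' : Set ℤ} (h : M ⊆ M') (n : ℕ) : logWeight M n ≤ logWeight M' n := by
  rw [logWeight_eq, logWeight_eq]
  refine mul_le_mul_of_nonneg_left (Finset.sum_le_sum fun k _ => ?_)
    (inv_nonneg.2 (Real.log_natCast_nonneg n))
  refine mul_le_mul_of_nonneg_right ?_ (by positivity)
  exact Set.indicator_le_indicator_of_subset (fun m hm => h hm) (fun _ => zero_le_one) _

lemma logWeight_bdd_above (M : Set ℤ) : IsBoundedUnder (· ≤ ·) atTop (logWeight M) := by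
  refine isBoundedUnder_of_eventually_le (a := 2) ?_
  filter_upwards [harm_tendsto.eventually_lt_const (by norm_num : (1 : ℝ) < 2)] with n hn
  refine le_trans ?_ hn.le
  rw [logWeight_eq, ← harm_eq]
  refine mul_le_mul_of_nonneg_left (Finset.sum_le_sum fun k _ => ?_)
    (inv_nonneg.2 (Real.log_natCast_nonneg n))
  have : chi {m : ℕ | (m : ℤ) ∈ M} (k + 1) * ((k + 1 : ℕ) : ℝ)⁻¹ ≤ 1 * ((k + 1 : ℕ) : ℝ)⁻¹ :=
    mul_le_mul_of_nonneg_right (chi_le_one _ _) (by positivity)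
  linarith

lemma logWeight_bdd_below (M : Set ℤ) : IsBoundedUnder (· ≥ ·) atTop (logWeight M) :=
  isBoundedUnder_of_eventually_ge (Eventually.of_forall (logWeight_nonneg M))

/-- The Abelian half: a bound for the zeta averages bounds the lower logarithmic density. -/
lemma logDensLow_le (M : Set ℤ) (a : ℝ)
    (h : ∀ s, 1 < s → zz s {m : ℕ | (m : ℤ) ∈ M} ≤ a * zz s univ) : logDensLow M ≤ a := by
  by_contra hc
  push Not at hc
  set A := {m : ℕ | (m : ℤ) ∈ M} with hA
  obtain ⟨c, hac, hc⟩ := exists_between hc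
  have h1 := eventually_lt_of_lt_liminf hc (logWeight_bdd_below M)
  obtain ⟨c', hac', hc'⟩ := exists_between hac
  have hm := harm_tendsto.const_mul c'
  rw [mul_one] at hm
  have h2 : ∀ᶠ n : ℕ in atTop,
      0 ≤ ∑ k ∈ Finset.range n, (chi A (k + 1) - c') * ((k + 1 : ℕ) : ℝ)⁻¹ := by
    filter_upwards [h1, hm.eventually_lt_const hc',
      tendsto_log_nat.eventually_gt_atTop 0] with n h3 h4 h5
    have h6 := h4.trans h3
    rw [logWeight_eq, mul_left_comm] at h6
    have h7 := lt_of_mul_lt_mul_left h6 (inv_pos.2 h5).le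
    simp only [sub_mul]
    rw [Finset.sum_sub_distrib, ← Finset.mul_sum, harm_eq]
    linarith
  obtain ⟨N, hN⟩ := eventually_atTop.1 h2
  have hK : ∃ K : ℝ, 0 ≤ K ∧ ∀ n, -K ≤ ∑ k ∈ Finset.range n,
      (chi A (k + 1) - c') * ((k + 1 : ℕ) : ℝ)⁻¹ := by
    refine ⟨∑ n ∈ Finset.range N, |∑ k ∈ Finset.range n,
      (chi A (k + 1) - c') * ((k + 1 : ℕ) : ℝ)⁻¹|,
      Finset.sum_nonneg fun _ _ => abs_nonneg _, fun n => ?_⟩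
    by_cases hn : N ≤ n
    · have := Finset.sum_nonneg (s := Finset.range N) (f := fun n => |∑ k ∈ Finset.range n,
        (chi A (k + 1) - c') * ((k + 1 : ℕ) : ℝ)⁻¹|) (fun _ _ => abs_nonneg _)
      linarith [hN n hn]
    · have := Finset.single_le_sum (s := Finset.range N) (f := fun n => |∑ k ∈ Finset.range n,
        (chi A (k + 1) - c') * ((k + 1 : ℕ) : ℝ)⁻¹|) (fun _ _ => abs_nonneg _)
        (Finset.mem_range.2 (not_le.1 hn))
      linarith [neg_abs_le (∑ k ∈ Finset.range n, (chi A (k + 1) - c') * ((k + 1 : ℕ) : ℝ)⁻¹)]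
  obtain ⟨K, hK0, hK⟩ := hK
  have h3 : ∀ s, 1 < s → c' * zz s univ - K ≤ zz s A := by
    intro s hs
    refine le_of_tendsto_of_tendsto' (((zz_tendsto s hs univ).const_mul c').sub_const K)
      (zz_tendsto s hs A) fun n => ?_
    have h4 := abel_lower _ (fun k : ℕ => ((k + 1 : ℕ) : ℝ) ^ (-(s - 1))) K hK
      (rpow_weight_anti (s - 1) (by linarith)) (fun k => by positivity) n
    have h5 : ∀ k : ℕ, (chi A (k + 1) - c') * ((k + 1 : ℕ) : ℝ)⁻¹ *
        ((k + 1 : ℕ) : ℝ) ^ (-(s - 1)) = chi A (k + 1) * ((k + 1 : ℕ) : ℝ) ^ (-s) -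
        c' * ((k + 1 : ℕ) : ℝ) ^ (-s) := by
      intro k
      have : ((k + 1 : ℕ) : ℝ) ^ (-s) = ((k + 1 : ℕ) : ℝ)⁻¹ * ((k + 1 : ℕ) : ℝ) ^ (-(s - 1)) := by
        rw [← Real.rpow_neg_one, ← Real.rpow_add (by positivity)]
        congr 1; ring
      rw [this]; ring
    simp only [h5] at h4
    rw [Finset.sum_sub_distrib, ← Finset.mul_sum] at h4
    simp only [zterm_eq s A, Set.indicator_univ]
    simp only [zero_add, Nat.cast_one, Real.one_rpow, mul_one] at h4
    linarith
  obtain ⟨s, hs, -, hKs⟩ := zz_unbounded (K / (c' - a)) 2 (by norm_num)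
  rw [div_lt_iff₀ (by linarith)] at hKs
  nlinarith [h3 s hs, h s hs]

/-! ### Finite truncations -/

def trunc (S : Set ℕ) (N : ℕ) : Set ℕ := {b ∈ S | b ≤ N}

lemma mult_periodic (S : Set ℕ) (h0 : ∀ b ∈ S, b ≠ 0) (N : ℕ) (k : ℤ) :
    k + (N.factorial : ℤ) ∈ multiplesZ (trunc S N) ↔ k ∈ multiplesZ (trunc S N) := by
  have hd : ∀ b ∈ trunc S N, (b : ℤ) ∣ (N.factorial : ℤ) := fun b hb => by
    exact_mod_cast Nat.dvd_factorial (Nat.pos_of_ne_zero (h0 b hb.1)) hb.2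
  constructor
  · rintro ⟨b, hb, h⟩
    exact ⟨b, hb, (dvd_add_left (hd b hb)).1 h⟩
  · rintro ⟨b, hb, h⟩
    exact ⟨b, hb, (dvd_add_left (hd b hb)).2 h⟩

lemma chi_periodic (S : Set ℕ) (h0 : ∀ b ∈ S, b ≠ 0) (N k : ℕ) :
    chi {m : ℕ | (m : ℤ) ∈ multiplesZ (trunc S N)} (k + N.factorial) =
      chi {m : ℕ | (m : ℤ) ∈ multiplesZ (trunc S N)} k := by
  have := mult_periodic S h0 N k
  unfold chi
  rw [Set.indicator_apply, Set.indicator_apply]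
  simp only [mem_ofPred_eq, Nat.cast_add, this]

/-- Davenport–Erdős. -/
lemma davenport_erdos (S : Set ℕ) (h0 : ∀ b ∈ S, b ≠ 0) (d : ℕ → ℝ) (a : ℝ)
    (hd : ∀ N : ℕ, (N.factorial : ℝ) * d N = ∑ j ∈ Finset.range N.factorial,
      chi {m : ℕ | (m : ℤ) ∈ multiplesZ (trunc S N)} j)
    (hda : ∀ N, d N ≤ a) (hlim : Tendsto d atTop (𝓝 a)) :
    logDensLow (multiplesZ S) = a := by
  apply le_antisymm
  · refine logDensLow_le _ _ fun s hs => ?_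
    refine le_of_tendsto' (zz_tendsto s hs _) fun n => ?_
    have e : ∑ k ∈ Finset.range n, {m : ℕ | (m : ℤ) ∈ multiplesZ S}.indicator
          (fun n : ℕ => (n : ℝ) ^ (-s)) (k + 1)
        ≤ ∑ k ∈ Finset.range n, {m : ℕ | (m : ℤ) ∈ multiplesZ (trunc S n)}.indicator
          (fun n : ℕ => (n : ℝ) ^ (-s)) (k + 1) := by
      refine Finset.sum_le_sum fun k hk => ?_
      rw [Set.indicator_apply]
      split_ifs with h
      · rw [Set.indicator_of_mem]
        obtain ⟨b, hb, h⟩ := h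
        refine ⟨b, ⟨hb, ?_⟩, h⟩
        have h' : b ∣ k + 1 := by exact_mod_cast h
        have := Nat.le_of_dvd (Nat.succ_pos k) h'
        have := Finset.mem_range.1 hk
        omega
      · exact zz_term_nonneg _ _ _
    refine e.trans ?_
    have e2 : ∑ k ∈ Finset.range n, {m : ℕ | (m : ℤ) ∈ multiplesZ (trunc S n)}.indicator
          (fun n : ℕ => (n : ℝ) ^ (-s)) (k + 1) ≤
          zz s {m : ℕ | (m : ℤ) ∈ multiplesZ (trunc S n)} := by
      refine Monotone.ge_of_tendsto ?_ (zz_tendsto s hs _) n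
      refine monotone_nat_of_le_succ fun j => ?_
      rw [Finset.sum_range_succ]
      linarith [zz_term_nonneg s {m : ℕ | (m : ℤ) ∈ multiplesZ (trunc S n)} (j + 1)]
    refine e2.trans ?_
    refine (zz_le_of_periodic _ ?_ n.factorial n.factorial_pos (chi_periodic S h0 n) (d n)
      (hd n) s hs).trans ?_
    · rintro c m ⟨b, hb, h⟩
      exact ⟨b, hb, by push_cast; exact h.mul_left _⟩
    · exact mul_le_mul_of_nonneg_right (hda n) (zz_nonneg _ _)
  · refine le_of_tendsto' hlim fun N => ?_
    have h1 := logWeight_tendsto_of_periodic (multiplesZ (trunc S N)) N.factorial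
      N.factorial_pos (chi_periodic S h0 N) (d N) (hd N)
    rw [← h1.liminf_eq]
    refine liminf_le_liminf (Eventually.of_forall fun n => logWeight_mono ?_ n)
      (logWeight_bdd_below _) (logWeight_bdd_above _).isCoboundedUnder_ge
    rintro x ⟨b, hb, h⟩
    exact ⟨b, hb.1, h⟩

/-! ### Haar measure -/

section Haar

variable (B : Set ℕ) [∀ b : B, NeZero (b : ℕ)]

lemma mH_univ : mH B univ = 1 := by
  have := Measure.addHaarMeasure_self (K₀ := (⊤ : TopologicalSpace.PositiveCompacts (Hgrp B)))
  simpa [mH] using this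

lemma mH_inv : (mH B).IsAddLeftInvariant := by
  unfold mH; infer_instance

def gen : Hgrp B := ⟨diagEmb B 1, AddSubgroup.le_topologicalClosure _ ⟨1, rfl⟩⟩

lemma gen_coe (j : ℕ) (b : B) : ((j • gen B : Hgrp B) : (b : B) → ZMod b) b = (j : ZMod b) := by
  simp [gen, diagEmb]

def Vset (B' : Set ℕ) (N : ℕ) : Set (Hgrp B) :=
  {h | ∃ b : B, ((b : ℕ) ∈ B' ∧ (b : ℕ) ≤ N) ∧ (h : (b : B) → ZMod b) b = 0}

lemma Vset_meas (B' : Set ℕ) (N : ℕ) : MeasurableSet (Vset B B' N) := by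
  have : Vset B B' N = ⋃ b : B, ⋃ _ : ((b : ℕ) ∈ B' ∧ (b : ℕ) ≤ N),
      {h : Hgrp B | (h : (b : B) → ZMod b) b = 0} := by
    ext h; simp [Vset]
  rw [this]
  refine MeasurableSet.iUnion fun b => MeasurableSet.iUnion fun _ => ?_
  apply IsClosed.measurableSet
  exact isClosed_eq ((continuous_apply b).comp continuous_subtype_val) continuous_const

lemma exists_approx (N : ℕ) (h : Hgrp B) :
    ∃ n : ℕ, ∀ b : B, (b : ℕ) ≤ N → (h : (b : B) → ZMod b) b = (n : ZMod b) := by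
  have hcl : (h : (b : B) → ZMod b) ∈ closure ((diagEmb B).range : Set ((b : B) → ZMod b)) := h.2
  have hfin : {b : B | (b : ℕ) ≤ N}.Finite :=
    (Set.finite_Iic N).preimage Subtype.val_injective.injOn
  have hopen : IsOpen ({b : B | (b : ℕ) ≤ N}.pi
      (fun b => {(h : (b : B) → ZMod b) b}) : Set ((b : B) → ZMod b)) :=
    isOpen_set_pi hfin fun b _ => isOpen_discrete _
  obtain ⟨x, hx, ⟨m, rfl⟩⟩ := mem_closure_iff.1 hcl _ hopen (fun b _ => rfl)
  refine ⟨(m % (N.factorial : ℤ)).toNat, fun b hb => ?_⟩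
  have h1 : (diagEmb B m) b = (h : (b : B) → ZMod b) b := hx b hb
  rw [← h1]
  have h2 : (((m % (N.factorial : ℤ)).toNat : ℤ)) = m % (N.factorial : ℤ) :=
    Int.toNat_of_nonneg (Int.emod_nonneg _ (by exact_mod_cast N.factorial_ne_zero))
  have h3 : (((m % (N.factorial : ℤ)).toNat : ℕ) : ZMod b) =
      ((((m % (N.factorial : ℤ)).toNat : ℤ)) : ZMod b) :=
    (Int.cast_natCast _).symm
  rw [h3, h2]
  show (m : ZMod b) = _
  rw [ZMod.intCast_eq_intCast_iff_dvd_sub]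
  have h4 : ((b : ℕ) : ℤ) ∣ (N.factorial : ℤ) := by
    exact_mod_cast Nat.dvd_factorial (Nat.pos_of_ne_zero (NeZero.ne (b : ℕ))) hb
  refine h4.trans ?_
  rw [Int.emod_def]
  exact ⟨-(m / N.factorial), by ring⟩

lemma Vset_measure (B' : Set ℕ) (hB'B : B' ⊆ B) (N : ℕ) :
    (N.factorial : ℝ) * (mH B (Vset B B' N)).toReal = ∑ j ∈ Finset.range N.factorial,
      chi {m : ℕ | (m : ℤ) ∈ multiplesZ (trunc B' N)} j := by
  have h0 : ∀ b ∈ B', b ≠ 0 := fun b hb => (NeZero.ne ((⟨b, hB'B hb⟩ : B) : ℕ))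
  have := mH_inv B
  have key : ∀ h : Hgrp B, ∑ j ∈ Finset.range N.factorial,
      (Vset B B' N).indicator (fun _ => (1 : ENNReal)) (h + j • gen B) =
      ENNReal.ofReal (∑ j ∈ Finset.range N.factorial,
        chi {m : ℕ | (m : ℤ) ∈ multiplesZ (trunc B' N)} j) := by
    intro h
    obtain ⟨n, hn⟩ := exists_approx B N h
    rw [← sum_period _ _ (chi_periodic B' h0 N) n,
      ENNReal.ofReal_sum_of_nonneg (fun j _ => chi_nonneg _ _)]
    refine Finset.sum_congr rfl fun j _ => ?_
    have hiff : h + j • gen B ∈ Vset B B' N ↔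
        n + j ∈ {m : ℕ | (m : ℤ) ∈ multiplesZ (trunc B' N)} := by
      have hb : ∀ b : B, (b : ℕ) ≤ N → (((h + j • gen B : Hgrp B) : (b : B) → ZMod b) b = 0 ↔
          ((b : ℕ) : ℤ) ∣ ((n + j : ℕ) : ℤ)) := by
        intro b hb
        have e : ((h + j • gen B : Hgrp B) : (b : B) → ZMod b) b = ((n + j : ℕ) : ZMod b) := by
          rw [AddSubgroup.coe_add, Pi.add_apply, gen_coe, hn b hb]; push_cast; rfl
        rw [e, ZMod.natCast_eq_zero_iff, Int.natCast_dvd_natCast]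
      constructor
      · rintro ⟨b, ⟨h1, h2⟩, h3⟩
        exact ⟨b, ⟨h1, h2⟩, (hb b h2).1 h3⟩
      · rintro ⟨b, ⟨h1, h2⟩, h3⟩
        exact ⟨⟨b, hB'B h1⟩, ⟨h1, h2⟩, (hb ⟨b, hB'B h1⟩ h2).2 h3⟩
    unfold chi
    rw [Set.indicator_apply, Set.indicator_apply]
    simp only [hiff]
    split_ifs <;> simp
  have hint : ∫⁻ h, ∑ j ∈ Finset.range N.factorial,
      (Vset B B' N).indicator (fun _ => (1 : ENNReal)) (h + j • gen B) ∂(mH B) =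
      N.factorial * mH B (Vset B B' N) := by
    rw [lintegral_finsetSum]
    · rw [Finset.sum_congr rfl (g := fun _ => mH B (Vset B B' N))]
      · simp
      · intro j _
        rw [lintegral_add_right_eq_self (fun h => (Vset B B' N).indicator
          (fun _ => (1 : ENNReal)) h), lintegral_indicator (Vset_meas B B' N)]
        simp
    · intro j _
      exact (measurable_const.indicator (Vset_meas B B' N)).comp (measurable_add_const _)
  simp only [key] at hint
  rw [lintegral_const, mH_univ, mul_one] at hint
  have := congrArg ENNReal.toReal hint
  rw [ENNReal.toReal_ofReal (Finset.sum_nonneg fun _ _ => chi_nonneg _ _), ENNReal.toReal_mul] at this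
  simpa using this.symm

end Haar

/-- For `B' ⊆ B` one has `m_H(W_{B'}) = 1 − δ(M_{B'})`. -/
theorem haar_window_eq_one_sub_logDensity (B : Set ℕ) [∀ b : B, NeZero (b : ℕ)]
    (hprim : Primitive B) (B' : Set ℕ) (hB'B : B' ⊆ B) :
    (mH B (Wset B B')).toReal = 1 - logDensLow (multiplesZ B') := by
  have h0 : ∀ b ∈ B', b ≠ 0 := fun b hb => (NeZero.ne ((⟨b, hB'B hb⟩ : B) : ℕ))
  have hprob : IsProbabilityMeasure (mH B) := ⟨mH_univ B⟩
  have hmono : Monotone (Vset B B') := by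
    rintro N N' h x ⟨b, ⟨h1, h2⟩, h3⟩
    exact ⟨b, ⟨h1, h2.trans h⟩, h3⟩
  have hW : Wset B B' = (⋃ N, Vset B B' N)ᶜ := by
    ext h
    simp only [Wset, Vset, mem_compl_iff, mem_iUnion, mem_ofPred_eq, not_exists]
    constructor
    · rintro hh N b ⟨⟨h1, _⟩, h3⟩
      exact hh b h1 h3
    · intro hh b hb h3
      exact hh b b ⟨⟨hb, le_rfl⟩, h3⟩
  have hlim : Tendsto (fun N => (mH B (Vset B B' N)).toReal) atTop
      (𝓝 (mH B (⋃ N, Vset B B' N)).toReal) :=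
    (ENNReal.tendsto_toReal (measure_ne_top _ _)).comp (tendsto_measure_iUnion_atTop hmono)
  rw [davenport_erdos B' h0 (fun N => (mH B (Vset B B' N)).toReal)
    (mH B (⋃ N, Vset B B' N)).toReal (Vset_measure B B' hB'B)
    (fun N => ENNReal.toReal_mono (measure_ne_top _ _) (measure_mono (subset_iUnion _ N))) hlim,
    hW, prob_compl_eq_one_sub (MeasurableSet.iUnion (Vset_meas B B')),
    ENNReal.toReal_sub_of_le prob_le_one ENNReal.one_ne_top, ENNReal.toReal_one]
end
end

section
/- Let β, r, n ∈ ℕ and 𝒞 ⊆ ℕ. Assume P ⊆ {n+1, n+2, …} is a finite set of prime numbers, each coprime to β. Then δ̲((βℤ + r) ∩ ⋂_{i=1}^n (F_𝒞 − i)) ≥ ∏_{p∈P} (1 − n/p) · δ̲((βℤ + r) ∩ ⋂_{i=1}^n (F_{𝒞∖M_P} − i)), where δ̲ denotes the lower logarithmic density. -/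
open Filter Set Topology MeasureTheory

open scoped Classical

noncomputable section

/-- The set of multiples of `P`, as a subset of `ℕ`. -/
def natMultiples (P : Set ℕ) : Set ℕ := {n : ℕ | ∃ p ∈ P, p ∣ n}

lemma exists_h (t : ℝ) (ht : 0 < t) : ∃ h : ℕ → ℝ, (∀ e, 0 ≤ h e) ∧ ∀ m : ℕ, m ≠ 0 →
    ∑ x ∈ m.divisorsAntidiagonal, (x.1 : ℝ) ^ (-t) * h x.2 = 1 := by
  let a : ArithmeticFunction ℝ := ⟨fun d => (d : ℝ) ^ (-t), by
    simp [Real.zero_rpow (neg_ne_zero.mpr ht.ne')]⟩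
  let h : ArithmeticFunction ℝ := ArithmeticFunction.prodPrimeFactors (fun p => 1 - (p : ℝ) ^ (-t))
  have hh : h.IsMultiplicative := ArithmeticFunction.IsMultiplicative.prodPrimeFactors _
  have ha : a.IsMultiplicative := by
    refine ⟨by simp [a], fun {m n} _ => ?_⟩
    simp only [a, ArithmeticFunction.coe_mk, Nat.cast_mul]
    exact Real.mul_rpow (by positivity) (by positivity)
  have key : a * h = (ArithmeticFunction.zeta : ArithmeticFunction ℝ) := by
    rw [ArithmeticFunction.IsMultiplicative.eq_iff_eq_on_prime_powers _ (ha.mul hh) _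
      ArithmeticFunction.isMultiplicative_zeta.natCast]
    intro p k hp
    have hq : ∀ i : ℕ, a (p ^ i) = ((p : ℝ) ^ (-t)) ^ i := by
      intro i
      simp only [a, ArithmeticFunction.coe_mk, Nat.cast_pow]
      rw [← Real.rpow_natCast, ← Real.rpow_natCast, ← Real.rpow_mul (by positivity),
        ← Real.rpow_mul (by positivity), mul_comm]
    have h1 : ∀ i : ℕ, h (p ^ (i+1)) = 1 - (p : ℝ) ^ (-t) := by
      intro i
      simp only [h]
      rw [ArithmeticFunction.prodPrimeFactors_apply (pow_ne_zero _ hp.ne_zero),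
        Nat.primeFactors_prime_pow (by omega) hp]
      simp
    rw [ArithmeticFunction.mul_apply, Nat.sum_divisorsAntidiagonal (fun x y => a x * h y),
      Nat.sum_divisors_prime_pow hp, Finset.sum_range_succ]
    have : ∀ i ∈ Finset.range k, a (p ^ i) * h (p ^ k / p ^ i)
        = ((p : ℝ) ^ (-t)) ^ i * (1 - (p : ℝ) ^ (-t)) := by
      intro i hi
      rw [Finset.mem_range] at hi
      rw [Nat.pow_div hi.le hp.pos, hq, show k - i = (k - i - 1) + 1 by omega, h1]
    rw [Finset.sum_congr rfl this, ← Finset.sum_mul, geom_sum_mul_neg,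
      Nat.div_self (pow_pos hp.pos _), hh.map_one, hq]
    simp [hp.ne_zero]
  refine ⟨h, ?_, ?_⟩
  · intro e
    by_cases he : e = 0
    · simp [he]
    · simp only [h]
      rw [ArithmeticFunction.prodPrimeFactors_apply he]
      apply Finset.prod_nonneg
      intro p hp
      have := Real.rpow_le_one_of_one_le_of_nonpos (x := (p:ℝ)) (z := -t)
        (by exact_mod_cast (Nat.prime_of_mem_primeFactors hp).one_le) (by linarith)
      linarith
  · intro m hm
    have := congrArg (fun F => F m) key
    simp only [ArithmeticFunction.mul_apply] at this
    simpa [hm, a] using this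

def wE (s : ℝ) (m : ℕ) : ENNReal := ENNReal.ofReal ((m : ℝ) ^ (-s))

lemma wE_conv (s s' : ℝ) (hs' : 1 < s') (hs : s' < s) : ∃ h : ℕ → ENNReal,
    ∀ m : ℕ, wE s' m = ∑ x ∈ m.divisorsAntidiagonal, wE s x.1 * h x.2 := by
  obtain ⟨h, h0, h1⟩ := exists_h (s - s') (by linarith)
  refine ⟨fun e => ENNReal.ofReal ((e : ℝ) ^ (-s') * h e), fun m => ?_⟩
  by_cases hm : m = 0
  · subst hm
    simp [wE, Real.zero_rpow (show -s' ≠ 0 by linarith)]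
  unfold wE
  have : ∀ x ∈ m.divisorsAntidiagonal,
      ENNReal.ofReal ((x.1 : ℝ) ^ (-s)) * ENNReal.ofReal ((x.2 : ℝ) ^ (-s') * h x.2)
      = ENNReal.ofReal ((m : ℝ) ^ (-s') * ((x.1 : ℝ) ^ (-(s - s')) * h x.2)) := by
    intro x hx
    rw [← ENNReal.ofReal_mul (by positivity)]
    congr 1
    rw [Nat.mem_divisorsAntidiagonal] at hx
    have hx1 : 0 < x.1 := Nat.pos_of_ne_zero (by rintro h; simp [h] at hx; omega)
    rw [← hx.1, Nat.cast_mul, Real.mul_rpow (by positivity) (by positivity),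
      show -s = -s' + -(s - s') by ring, Real.rpow_add (by positivity)]
    ring
  rw [Finset.sum_congr rfl this, ← ENNReal.ofReal_sum_of_nonneg, ← Finset.mul_sum, h1 m hm, mul_one]
  intro x _
  have := h0 x.2
  positivity

lemma tsum_divisorsAntidiagonal (F : ℕ → ℕ → ENNReal) (h0 : ∀ d e, d * e = 0 → F d e = 0) :
    ∑' m : ℕ, ∑ x ∈ m.divisorsAntidiagonal, F x.1 x.2 = ∑' d, ∑' e, F d e := by
  have : ∀ m : ℕ, ∑ x ∈ m.divisorsAntidiagonal, F x.1 x.2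
      = ∑' x : ℕ × ℕ, if x.1 * x.2 = m then F x.1 x.2 else 0 := by
    intro m
    rw [tsum_eq_sum (s := m.divisorsAntidiagonal)]
    · apply Finset.sum_congr rfl
      intro x hx
      rw [Nat.mem_divisorsAntidiagonal] at hx
      simp [hx.1]
    · intro x hx
      rw [Nat.mem_divisorsAntidiagonal] at hx
      split_ifs with h
      · apply h0
        by_contra h2
        exact hx ⟨h, by omega⟩
      · rfl
  simp_rw [this]
  rw [ENNReal.tsum_comm, ENNReal.tsum_prod']
  congr! 4 with d e
  rw [tsum_eq_single (d * e) (fun b hb => if_neg (Ne.symm hb)), if_pos rfl]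

def SE (M : Set ℕ) (s : ℝ) : ENNReal := ∑' m, M.indicator (wE s) m

lemma SE_mono (M : Set ℕ) (hM : ∀ d ∈ M, ∀ e, d * e ∈ M) (s s' : ℝ) (hs' : 1 < s') (hs : s' < s) :
    SE M s * SE univ s' ≤ SE M s' * SE univ s := by
  obtain ⟨h, hh⟩ := wE_conv s s' hs' hs
  have hw0 : wE s 0 = 0 := by simp [wE, Real.zero_rpow (show -s ≠ 0 by linarith)]
  let k : ℕ → ENNReal := fun e => if e = 0 then 0 else h e
  have hk : ∀ m : ℕ, wE s' m = ∑ x ∈ m.divisorsAntidiagonal, wE s x.1 * k x.2 := by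
    intro m
    rw [hh]
    apply Finset.sum_congr rfl
    intro x hx
    rw [Nat.mem_divisorsAntidiagonal] at hx
    have : x.2 ≠ 0 := by rintro h; simp [h] at hx; omega
    simp [k, this]
  have hz : ∀ (f : ℕ → ENNReal) , f 0 = 0 → ∀ d e, d * e = 0 → f d * k e = 0 := by
    intro f hf d e hde
    rcases Nat.mul_eq_zero.mp hde with h | h <;> simp [h, hf, k]
  have e1 : SE univ s' = SE univ s * ∑' e, k e := by
    simp only [SE, indicator_univ]
    simp_rw [hk]
    rw [tsum_divisorsAntidiagonal (fun d e => wE s d * k e) (hz _ hw0)]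
    simp_rw [ENNReal.tsum_mul_left, ENNReal.tsum_mul_right]
  have e2 : SE M s * ∑' e, k e ≤ SE M s' := by
    unfold SE
    rw [← ENNReal.tsum_mul_right]
    simp_rw [← ENNReal.tsum_mul_left]
    rw [← tsum_divisorsAntidiagonal (fun d e => M.indicator (wE s) d * k e)
      (hz _ (by simp [indicator, hw0]))]
    apply ENNReal.tsum_le_tsum
    intro m
    by_cases hm : m ∈ M
    · rw [indicator_of_mem hm, hk]
      apply Finset.sum_le_sum
      intro x _
      gcongr
      exact indicator_le_self' (by simp) _
    · rw [indicator_of_notMem hm]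
      apply le_of_eq
      apply Finset.sum_eq_zero
      intro x hx
      rw [Nat.mem_divisorsAntidiagonal] at hx
      rw [indicator_of_notMem, zero_mul]
      intro h
      exact hm (hx.1 ▸ hM _ h _)
  calc _ = (SE M s * ∑' e, k e) * SE univ s := by rw [e1]; ring
    _ ≤ _ := by gcongr

def DR (M : Set ℕ) (s : ℝ) : ℝ := ∑' m, M.indicator (fun m : ℕ => (m : ℝ) ^ (-s)) m

lemma DR_summable (M : Set ℕ) (s : ℝ) (hs : 1 < s) :
    Summable (M.indicator (fun m : ℕ => (m : ℝ) ^ (-s))) :=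
  (Real.summable_nat_rpow.mpr (by linarith)).indicator M

lemma ind_nonneg (M : Set ℕ) (s : ℝ) (m : ℕ) : 0 ≤ M.indicator (fun m : ℕ => (m : ℝ) ^ (-s)) m :=
  indicator_nonneg (fun _ _ => by positivity) _

lemma SE_eq (M : Set ℕ) (s : ℝ) (hs : 1 < s) : SE M s = ENNReal.ofReal (DR M s) := by
  unfold SE DR
  rw [ENNReal.ofReal_tsum_of_nonneg (ind_nonneg M s) (DR_summable M s hs)]
  congr! 2 with m
  by_cases hm : m ∈ M <;> simp [hm, wE]

lemma DR_nonneg (M : Set ℕ) (s : ℝ) : 0 ≤ DR M s := tsum_nonneg (ind_nonneg M s)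

lemma DR_mono (M : Set ℕ) (hM : ∀ d ∈ M, ∀ e, d * e ∈ M) (s s' : ℝ) (hs' : 1 < s') (hs : s' ≤ s) :
    DR M s * DR univ s' ≤ DR M s' * DR univ s := by
  rcases hs.eq_or_lt with rfl | hs
  · rfl
  have := SE_mono M hM s s' hs' hs
  rw [SE_eq _ _ (by linarith), SE_eq _ _ (by linarith), SE_eq _ _ (by linarith),
    SE_eq _ _ (by linarith), ← ENNReal.ofReal_mul (DR_nonneg _ _),
    ← ENNReal.ofReal_mul (DR_nonneg _ _), ENNReal.ofReal_le_ofReal_iff] at this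
  · exact this
  · exact mul_nonneg (DR_nonneg _ _) (DR_nonneg _ _)

lemma DR_le (M M' : Set ℕ) (h : M ⊆ M') (s : ℝ) (hs : 1 < s) : DR M s ≤ DR M' s := by
  apply (DR_summable M s hs).tsum_le_tsum _ (DR_summable M' s hs)
  intro m
  exact indicator_le_indicator_of_subset h (fun _ => by positivity) m

lemma DR_pos (s : ℝ) (hs : 1 < s) : 0 < DR univ s := by
  apply (DR_summable univ s hs).tsum_pos (ind_nonneg _ _) 1
  simp

/-- multiples of elements of `D` that are at most `K` -/
def mulK (D : Set ℕ) (K : ℕ) : Set ℕ := {m | ∃ c ∈ D, c ≤ K ∧ c ∣ m}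
/-- multiples in ℕ -/
def mulN (D : Set ℕ) : Set ℕ := {m | ∃ c ∈ D, c ∣ m}

lemma tail_small (D : Set ℕ) (ε : ℝ) (hε : 0 < ε) : ∃ K, ∀ᶠ s in 𝓝[>] (1:ℝ),
    DR (mulN D \ mulK D K) s ≤ ε * DR univ s := by
  have hMup : ∀ d ∈ mulN D, ∀ e, d * e ∈ mulN D :=
    fun d ⟨c, hc, hd⟩ e => ⟨c, hc, hd.mul_right e⟩
  have hKup : ∀ K, ∀ d ∈ mulK D K, ∀ e, d * e ∈ mulK D K :=
    fun K d ⟨c, hc, hk, hd⟩ e => ⟨c, hc, hk, hd.mul_right e⟩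
  let V : Set ℝ := (fun s => DR (mulN D) s / DR univ s) '' Ioi 1
  have hbdd : BddAbove V := by
    refine ⟨1, ?_⟩
    rintro _ ⟨s, hs, rfl⟩
    exact div_le_one_of_le₀ (DR_le _ _ (subset_univ _) s hs) (DR_nonneg _ _)
  obtain ⟨_, ⟨s0, hs0, rfl⟩, hlt⟩ := exists_lt_of_lt_csSup (s := V) (b := sSup V - ε / 2)
    (Set.Nonempty.image _ ⟨2, by simp⟩) (by linarith)
  rw [mem_Ioi] at hs0
  simp only at hlt
  rw [lt_div_iff₀ (DR_pos s0 hs0)] at hlt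
  have hZ0 := DR_pos s0 hs0
  have hlim := (DR_summable (mulN D) s0 hs0).hasSum.tendsto_sum_nat
  obtain ⟨K, hK⟩ := (hlim.eventually (lt_mem_nhds
    (show DR (mulN D) s0 - ε / 2 * DR univ s0 < DR (mulN D) s0 by
      have := mul_pos hε hZ0; linarith))).exists
  have hK2 : DR (mulN D) s0 - ε / 2 * DR univ s0 < DR (mulK D K) s0 := by
    refine hK.trans_le ?_
    refine le_trans ?_ ((DR_summable (mulK D K) s0 hs0).sum_le_tsum (Finset.range K)
      (fun m _ => ind_nonneg _ _ _))
    apply Finset.sum_le_sum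
    intro m hm
    by_cases h0 : m = 0
    · subst h0
      simp [indicator, Real.zero_rpow (show -s0 ≠ 0 by linarith)]
    by_cases hmM : m ∈ mulN D
    · obtain ⟨c, hc, hcm⟩ := hmM
      have : m ∈ mulK D K := ⟨c, hc, (Nat.le_of_dvd (by omega) hcm).trans
        (Finset.mem_range.mp hm).le, hcm⟩
      rw [indicator_of_mem this]
      exact indicator_le_self' (by intros; positivity) _
    · rw [indicator_of_notMem hmM]
      exact ind_nonneg _ _ _
  refine ⟨K, ?_⟩
  filter_upwards [Ioc_mem_nhdsGT hs0] with s hs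
  have hZ := DR_pos s hs.1
  have hsub : mulK D K ⊆ mulN D := fun m ⟨c, hc, _, hd⟩ => ⟨c, hc, hd⟩
  have hdiff : DR (mulN D \ mulK D K) s = DR (mulN D) s - DR (mulK D K) s := by
    unfold DR
    rw [← (DR_summable _ s hs.1).tsum_sub (DR_summable _ s hs.1)]
    refine tsum_congr fun m => ?_
    by_cases h1 : m ∈ mulK D K
    · simp [h1, hsub h1]
    · by_cases h2 : m ∈ mulN D <;> simp [h1, h2]
  have h1 : DR (mulN D) s ≤ sSup V * DR univ s := by
    rw [← div_le_iff₀ hZ]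
    exact le_csSup hbdd ⟨s, hs.1, rfl⟩
  have h2 := DR_mono (mulK D K) (hKup K) s0 s hs.1 hs.2
  have h3 : (sSup V - ε) * DR univ s ≤ DR (mulK D K) s := by
    have h4 : (sSup V - ε) * DR univ s0 ≤ DR (mulK D K) s0 := by linarith
    have h5 := mul_le_mul_of_nonneg_right h4 hZ.le
    have h6 : ((sSup V - ε) * DR univ s) * DR univ s0 ≤ DR (mulK D K) s * DR univ s0 := by
      linarith
    exact le_of_mul_le_mul_right h6 hZ0
  rw [hdiff]
  linarith

lemma tail_log (D : Set ℕ) (n : ℕ) (ε : ℝ) (hε : 0 < ε) : ∃ K, ∀ᶠ x : ℕ in atTop,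
    ∑ k ∈ Finset.Icc 1 (x + n), (mulN D \ mulK D K).indicator (fun m : ℕ => (m : ℝ)⁻¹) k
      ≤ ε * Real.log x := by
  set e2 := Real.exp 2 with he2
  have he2pos : 0 < e2 := Real.exp_pos 2
  obtain ⟨K, hK⟩ := tail_small D (ε / (2 * e2)) (by positivity)
  refine ⟨K, ?_⟩
  have hlog : Tendsto (fun x : ℕ => Real.log x) atTop atTop :=
    Real.tendsto_log_atTop.comp tendsto_natCast_atTop_atTop
  have hs : Tendsto (fun x : ℕ => 1 + (Real.log x)⁻¹) atTop (𝓝[>] (1:ℝ)) := by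
    apply tendsto_nhdsWithin_iff.mpr
    constructor
    · simpa using (tendsto_inv_atTop_zero.comp hlog).const_add (1:ℝ)
    · filter_upwards [hlog.eventually_gt_atTop 0] with x hx
      simp [hx]
  have hZ : ∀ᶠ s in 𝓝[>] (1:ℝ), (s - 1) * DR univ s < 2 := by
    have := tendsto_sub_mul_tsum_nat_rpow.eventually (gt_mem_nhds (show (1:ℝ) < 2 by norm_num))
    filter_upwards [this] with s hs
    have e : DR univ s = ∑' (n : ℕ), 1 / (n : ℝ) ^ s := by
      unfold DR
      refine tsum_congr fun m => ?_
      simp [Real.rpow_neg]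
    rw [e]
    exact hs
  filter_upwards [hs.eventually hK, hs.eventually hZ, hlog.eventually_gt_atTop 0,
    eventually_ge_atTop (n + 2)] with x h1 h2 h3 h4
  set s := 1 + (Real.log x)⁻¹ with hsdef
  have hs1 : 1 < s := by simp [hsdef, h3]
  have h5 : DR univ s ≤ 2 * Real.log x := by
    have : s - 1 = (Real.log x)⁻¹ := by simp [hsdef]
    rw [this, inv_mul_lt_iff₀ h3] at h2
    linarith
  have h6 : ∑ k ∈ Finset.Icc 1 (x + n),
      (mulN D \ mulK D K).indicator (fun m : ℕ => (m : ℝ)⁻¹) k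
      ≤ ∑ k ∈ Finset.Icc 1 (x + n),
        e2 * (mulN D \ mulK D K).indicator (fun m : ℕ => (m : ℝ) ^ (-s)) k := by
    apply Finset.sum_le_sum
    intro k hk
    rw [Finset.mem_Icc] at hk
    by_cases hkE : k ∈ mulN D \ mulK D K
    · rw [indicator_of_mem hkE, indicator_of_mem hkE]
      have hkpos : (0:ℝ) < k := by exact_mod_cast hk.1
      have : (k:ℝ)⁻¹ = (k:ℝ) ^ ((Real.log x)⁻¹) * (k:ℝ) ^ (-s) := by
        rw [← Real.rpow_add hkpos, ← Real.rpow_neg_one]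
        congr 1
        simp [hsdef]
      rw [this]
      gcongr
      rw [Real.rpow_def_of_pos hkpos, he2, Real.exp_le_exp, mul_inv_le_iff₀ h3]
      have h7 : (k:ℝ) ≤ (x:ℝ) ^ 2 := by
        have : k ≤ x ^ 2 := by nlinarith
        exact_mod_cast this
      have := Real.log_le_log hkpos h7
      rwa [Real.log_pow] at this
    · rw [indicator_of_notMem hkE, indicator_of_notMem hkE]; simp
  calc _ ≤ _ := h6
    _ = e2 * ∑ k ∈ Finset.Icc 1 (x + n),
        (mulN D \ mulK D K).indicator (fun m : ℕ => (m : ℝ) ^ (-s)) k := by rw [Finset.mul_sum]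
    _ ≤ e2 * DR (mulN D \ mulK D K) s := by
      gcongr
      exact (DR_summable _ s hs1).sum_le_tsum _ (fun m _ => ind_nonneg _ _ _)
    _ ≤ e2 * (ε / (2 * e2) * (2 * Real.log x)) := by
      gcongr
      exact h1.trans (by gcongr)
    _ = ε * Real.log x := by field_simp

/-- The unnormalised logarithmic sums. -/
def TL (A : Set ℤ) (x : ℕ) : ℝ :=
  ∑ k ∈ Finset.Icc 1 x, A.indicator (fun m : ℤ => ((m : ℝ))⁻¹) (k : ℤ)

lemma TL_eq (A : Set ℤ) (x : ℕ) :
    TL A x = ∑ k ∈ Finset.Icc 1 x, A.indicator (fun _ => (1:ℝ)) (k : ℤ) * (k : ℝ)⁻¹ := by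
  apply Finset.sum_congr rfl
  intro k _
  by_cases h : (k : ℤ) ∈ A <;> simp [h]

lemma TL_le (A B : Set ℤ) (h : A ⊆ B) (x : ℕ) : TL A x ≤ TL B x := by
  rw [TL_eq, TL_eq]
  apply Finset.sum_le_sum
  intro k _
  refine mul_le_mul_of_nonneg_right ?_ (by positivity)
  exact indicator_le_indicator_of_subset h (fun _ => zero_le_one) _

lemma TL_shift_one (S : Set ℤ) (x : ℕ) : TL {m | m + 1 ∈ S} x ≤ TL S x + 1 := by
  have hf1 : ∀ m : ℤ, S.indicator (fun _ => (1:ℝ)) m ≤ 1 := fun m => by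
    by_cases h : m ∈ S <;> simp [h]
  have hf0 : ∀ m : ℤ, 0 ≤ S.indicator (fun _ => (1:ℝ)) m := fun m => by
    by_cases h : m ∈ S <;> simp [h]
  have key : TL {m | m + 1 ∈ S} x ≤ TL S x +
      S.indicator (fun _ => (1:ℝ)) ((x:ℤ) + 1) * ((x:ℝ) + 1)⁻¹ + 1 - ((x:ℝ) + 1)⁻¹ := by
    induction x with
    | zero => simp [TL]; exact hf0 1
    | succ x ih =>
      rw [TL_eq, TL_eq, Finset.sum_Icc_succ_top (by omega), Finset.sum_Icc_succ_top (by omega),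
        ← TL_eq, ← TL_eq]
      have e : ({m | m + 1 ∈ S} : Set ℤ).indicator (fun _ => (1:ℝ)) ((x + 1 : ℕ) : ℤ)
          = S.indicator (fun _ => (1:ℝ)) ((x:ℤ) + 1 + 1) := by
        simp [indicator]
      rw [e]
      push_cast
      have a1 := hf1 ((x:ℤ) + 1 + 1)
      have a2 : ((x:ℝ) + 1 + 1)⁻¹ ≤ ((x:ℝ) + 1)⁻¹ := by gcongr; linarith
      nlinarith [mul_le_mul_of_nonneg_left a2 (sub_nonneg.mpr a1)]
  have h3 : 0 ≤ ((x:ℝ) + 1)⁻¹ := by positivity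
  nlinarith [hf1 ((x:ℤ) + 1)]

lemma TL_shift (S : Set ℤ) (j x : ℕ) : TL {m | m + (j:ℤ) ∈ S} x ≤ TL S x + j := by
  induction j with
  | zero => simp
  | succ j ih =>
    have := TL_shift_one {m | m + (j:ℤ) ∈ S} x
    have e : {m : ℤ | m + 1 ∈ {m : ℤ | m + (j:ℤ) ∈ S}} = {m : ℤ | m + ((j + 1 : ℕ):ℤ) ∈ S} := by
      ext m
      simp only [mem_ofPred_eq]
      push_cast
      rw [show m + 1 + (j:ℤ) = m + (j + 1) by ring]
    rw [e] at this
    push_cast at this ⊢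
    linarith

lemma count_good (p n N : ℕ) (hp : p.Prime) (hpN : Nat.Coprime p N) (m : ℤ) :
    (p : ℝ) - n ≤ ((Finset.range p).filter
      (fun j => ∀ i ∈ Finset.Icc 1 n, ¬ (p:ℤ) ∣ m + ((j * N : ℕ) : ℤ) + (i:ℤ))).card := by
  have h1 := Finset.card_filter_add_card_filter_not (s := Finset.range p)
    (fun j => ∀ i ∈ Finset.Icc 1 n, ¬ (p:ℤ) ∣ m + ((j * N : ℕ) : ℤ) + (i:ℤ))
  have h2 : ((Finset.range p).filter
      (fun j => ¬ ∀ i ∈ Finset.Icc 1 n, ¬ (p:ℤ) ∣ m + ((j * N : ℕ) : ℤ) + (i:ℤ))).card ≤ n := by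
    have hsub : ((Finset.range p).filter
      (fun j => ¬ ∀ i ∈ Finset.Icc 1 n, ¬ (p:ℤ) ∣ m + ((j * N : ℕ) : ℤ) + (i:ℤ))) ⊆
      (Finset.Icc 1 n).biUnion (fun i => (Finset.range p).filter
        (fun j => (p:ℤ) ∣ m + ((j * N : ℕ) : ℤ) + (i:ℤ))) := by
      intro j hj
      rw [Finset.mem_filter] at hj
      obtain ⟨hj, h⟩ := hj
      push Not at h
      obtain ⟨i, hi, h⟩ := h
      rw [Finset.mem_biUnion]
      exact ⟨i, hi, Finset.mem_filter.mpr ⟨hj, h⟩⟩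
    refine (Finset.card_le_card hsub).trans (Finset.card_biUnion_le.trans ?_)
    refine (Finset.sum_le_card_nsmul _ _ 1 ?_).trans (by simp)
    intro i _
    rw [Finset.card_le_one]
    intro a ha b hb
    rw [Finset.mem_filter, Finset.mem_range] at ha hb
    have hd := dvd_sub ha.2 hb.2
    have e : m + ((a * N : ℕ) : ℤ) + (i:ℤ) - (m + ((b * N : ℕ) : ℤ) + (i:ℤ))
        = ((a:ℤ) - b) * N := by push_cast; ring
    rw [e] at hd
    have hd2 : (p:ℤ) ∣ (a:ℤ) - b :=
      IsCoprime.dvd_of_dvd_mul_right (Nat.isCoprime_iff_coprime.mpr hpN) hd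
    obtain ⟨c, hc⟩ := hd2
    have h3 := ha.1
    have h4 := hb.1
    have : c = 0 := by
      by_contra hc0
      rcases lt_or_gt_of_ne hc0 with h | h <;> nlinarith
    subst this
    omega
  rw [Finset.card_range] at h1
  rw [sub_le_iff_le_add]
  exact_mod_cast (h1.symm.le.trans (Nat.add_le_add_left h2 _))

/-- averaging over the shifts -/
lemma TL_average (p n N : ℕ) (hp : p.Prime) (hpN : Nat.Coprime p N)
    (B : Set ℤ) (hB : ∀ m : ℤ, m ∈ B → m + (N:ℤ) ∈ B) (x : ℕ) :
    ((p:ℝ) - n) * TL B x ≤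
      p * TL (B ∩ {m : ℤ | ∀ i ∈ Finset.Icc 1 n, ¬ (p:ℤ) ∣ m + (i:ℤ)}) x + p * (p * N) := by
  set G : Set ℤ := {m : ℤ | ∀ i ∈ Finset.Icc 1 n, ¬ (p:ℤ) ∣ m + (i:ℤ)} with hG
  have hBj : ∀ j : ℕ, ∀ m : ℤ, m ∈ B → m + ((j * N : ℕ):ℤ) ∈ B := by
    intro j m hm
    induction j with
    | zero => simpa using hm
    | succ j ih =>
      have := hB _ ih
      convert this using 1
      push_cast
      ring
  have h1 : ((p:ℝ) - n) * TL B x ≤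
      ∑ j ∈ Finset.range p, TL {m | m + ((j * N : ℕ):ℤ) ∈ B ∩ G} x := by
    simp_rw [TL_eq]
    rw [Finset.sum_comm, Finset.mul_sum]
    apply Finset.sum_le_sum
    intro k _
    rw [← Finset.sum_mul, ← mul_assoc]
    gcongr
    by_cases hk : (k:ℤ) ∈ B
    · rw [indicator_of_mem hk, mul_one]
      refine (count_good p n N hp hpN k).trans ?_
      rw [Finset.card_filter]
      push_cast
      apply Finset.sum_le_sum
      intro j _
      split_ifs with h
      · rw [indicator_of_mem]
        refine ⟨hBj j _ hk, ?_⟩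
        intro i hi
        have := h i hi
        push_cast
        exact this
      · exact indicator_nonneg (by simp) _
    · rw [indicator_of_notMem hk, mul_zero]
      exact Finset.sum_nonneg fun j _ => indicator_nonneg (by simp) _
  refine h1.trans ?_
  have h2 : ∀ j ∈ Finset.range p, TL {m | m + ((j * N : ℕ):ℤ) ∈ B ∩ G} x
      ≤ TL (B ∩ G) x + p * N := by
    intro j hj
    have := TL_shift (B ∩ G) (j * N) x
    have h3 : ((j * N : ℕ):ℝ) ≤ p * N := by
      push_cast
      gcongr
      exact (Finset.mem_range.mp hj).le
    linarith
  refine (Finset.sum_le_card_nsmul _ _ _ h2).trans ?_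
  rw [Finset.card_range, nsmul_eq_mul, mul_add]

/-- the sets of the theorem -/
def setA (β r n : ℕ) (C : Set ℕ) : Set ℤ := {m : ℤ | ∃ k : ℤ, m = (β : ℤ) * k + r} ∩
        ⋂ i ∈ Finset.Icc 1 n, {m : ℤ | m + (i : ℤ) ∈ freeZ C}

lemma mem_setA (β r n : ℕ) (C : Set ℕ) (m : ℤ) : m ∈ setA β r n C ↔
    (∃ k : ℤ, m = (β : ℤ) * k + r) ∧ ∀ i ∈ Finset.Icc 1 n, ∀ c ∈ C, ¬ (c:ℤ) ∣ m + (i:ℤ) := by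
  simp [setA, freeZ, multiplesZ]

lemma one_prime_TL (β r n : ℕ) (hβ : 0 < β) (C : Set ℕ) (p : ℕ) (hp : p.Prime) (hpn : n < p)
    (hpβ : Nat.Coprime p β) (ε : ℝ) (hε : 0 < ε) :
    ∃ c : ℝ, ∀ᶠ x : ℕ in atTop,
      (1 - (n:ℝ) / p) * TL (setA β r n (C \ natMultiples {p})) x
        ≤ TL (setA β r n C) x + c + ε * Real.log x := by
  set D := C \ natMultiples {p} with hD
  have hDp : ∀ c ∈ D, ¬ p ∣ c := fun c hc h => hc.2 ⟨p, rfl, h⟩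
  have hD0 : ∀ c ∈ D, 0 < c := fun c hc => Nat.pos_of_ne_zero (by
    rintro rfl; exact hDp _ hc (dvd_zero p))
  obtain ⟨K, hK⟩ := tail_log D n (ε / (n * (1 + n) + 1)) (by positivity)
  set DK : Set ℕ := {c ∈ D | c ≤ K} with hDK
  set N : ℕ := β * ∏ c ∈ (Finset.range (K+1)).filter (fun c => c ∈ D), c with hN
  have hpN : Nat.Coprime p N := by
    refine hpβ.mul_right (Nat.Coprime.prod_right ?_)
    intro c hc
    exact (Nat.Prime.coprime_iff_not_dvd hp).mpr (hDp c (Finset.mem_filter.mp hc).2)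
  have hcN : ∀ c ∈ DK, c ∣ N := by
    intro c hc
    refine Dvd.dvd.mul_left (Finset.dvd_prod_of_mem _ ?_) _
    exact Finset.mem_filter.mpr ⟨Finset.mem_range.mpr (Nat.lt_succ_of_le hc.2), hc.1⟩
  set AK := setA β r n DK with hAK
  have hper : ∀ m : ℤ, m ∈ AK → m + (N:ℤ) ∈ AK := by
    intro m hm
    rw [hAK, mem_setA] at hm ⊢
    obtain ⟨⟨k, hk⟩, h⟩ := hm
    refine ⟨⟨k + ∏ c ∈ (Finset.range (K+1)).filter (fun c => c ∈ D), (c:ℤ), ?_⟩, ?_⟩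
    · rw [hk, hN]; push_cast; ring
    · intro i hi c hc hdvd
      apply h i hi c hc
      have h1 : (c:ℤ) ∣ (N:ℤ) := by exact_mod_cast hcN c hc
      have := dvd_sub hdvd h1
      rwa [show m + (N:ℤ) + (i:ℤ) - (N:ℤ) = m + (i:ℤ) by ring] at this
  have hsub : setA β r n D ⊆ AK := by
    intro m hm
    rw [hAK, mem_setA]
    rw [mem_setA] at hm
    exact ⟨hm.1, fun i hi c hc => hm.2 i hi c hc.1⟩
  set E : Set ℕ := mulN D \ mulK D K with hE
  have hppos : (0:ℝ) < p := by exact_mod_cast hp.pos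
  set G : Set ℤ := {m : ℤ | ∀ i ∈ Finset.Icc 1 n, ¬ (p:ℤ) ∣ m + (i:ℤ)} with hG
  have hcov : ∀ x : ℕ, TL (AK ∩ G) x ≤ TL (setA β r n C) x +
      n * ((1 + n) * ∑ k ∈ Finset.Icc 1 (x + n), E.indicator (fun m : ℕ => (m : ℝ)⁻¹) k) := by
    intro x
    have step1 : TL (AK ∩ G) x ≤ TL (setA β r n C) x +
        ∑ k ∈ Finset.Icc 1 x, ∑ i ∈ Finset.Icc 1 n,
          E.indicator (fun _ => (1:ℝ)) (k + i) * (k:ℝ)⁻¹ := by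
      rw [TL_eq, TL_eq, ← Finset.sum_add_distrib]
      apply Finset.sum_le_sum
      intro k hk
      rw [Finset.mem_Icc] at hk
      rw [← Finset.sum_mul, ← add_mul]
      gcongr
      have hnn : 0 ≤ ∑ i ∈ Finset.Icc 1 n, E.indicator (fun _ => (1:ℝ)) (k + i) :=
        Finset.sum_nonneg fun i _ => indicator_nonneg (by simp) _
      by_cases h1 : (k:ℤ) ∈ AK ∩ G
      · rw [indicator_of_mem h1]
        by_cases h2 : (k:ℤ) ∈ setA β r n C
        · rw [indicator_of_mem h2]; linarith
        · rw [indicator_of_notMem h2, zero_add]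
          obtain ⟨h1a, h1b⟩ := h1
          rw [hAK, mem_setA] at h1a
          rw [mem_setA] at h2
          push Not at h2
          obtain ⟨i, hi, c, hc, hdvd⟩ := h2 h1a.1
          have hcD : c ∈ D := by
            refine ⟨hc, ?_⟩
            rintro ⟨q, hq, hqc⟩
            rw [mem_singleton_iff] at hq
            subst hq
            exact h1b i hi (dvd_trans (by exact_mod_cast hqc) hdvd)
          have hmem : k + i ∈ E := by
            refine ⟨⟨c, hcD, by exact_mod_cast hdvd⟩, ?_⟩
            rintro ⟨c', hc', hle, hd'⟩
            exact h1a.2 i hi c' ⟨hc', hle⟩ (by exact_mod_cast hd')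
          have := Finset.single_le_sum (f := fun i => E.indicator (fun _ => (1:ℝ)) (k + i))
            (fun i _ => indicator_nonneg (by simp) _) hi
          simpa [hmem] using this
      · rw [indicator_of_notMem h1]
        have : 0 ≤ (setA β r n C).indicator (fun _ => (1:ℝ)) (k:ℤ) := indicator_nonneg (by simp) _
        linarith
    refine step1.trans ?_
    gcongr
    rw [Finset.sum_comm]
    refine (Finset.sum_le_card_nsmul _ _
      ((1 + n) * ∑ k ∈ Finset.Icc 1 (x + n), E.indicator (fun m : ℕ => (m : ℝ)⁻¹) k) ?_).trans
      (by simp)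
    intro i hi
    rw [Finset.mem_Icc] at hi
    calc ∑ k ∈ Finset.Icc 1 x, E.indicator (fun _ => (1:ℝ)) (k + i) * (k:ℝ)⁻¹
        ≤ ∑ k ∈ Finset.Icc 1 x, (1 + n) * E.indicator (fun m : ℕ => (m : ℝ)⁻¹) (k + i) := by
          apply Finset.sum_le_sum
          intro k hk
          rw [Finset.mem_Icc] at hk
          by_cases h : k + i ∈ E
          · rw [indicator_of_mem h, indicator_of_mem h, one_mul]
            have hk0 : (0:ℝ) < k := by exact_mod_cast hk.1
            have hk1 : (1:ℝ) ≤ k := by exact_mod_cast hk.1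
            have hin : (i:ℝ) ≤ n := by exact_mod_cast hi.2
            rw [inv_le_iff_one_le_mul₀ hk0]
            push_cast
            rw [mul_assoc, mul_comm, mul_assoc, inv_mul_eq_div, le_div_iff₀ (by positivity)]
            nlinarith [mul_nonneg (sub_nonneg.mpr hk1) (Nat.cast_nonneg (α := ℝ) n)]
          · rw [indicator_of_notMem h, indicator_of_notMem h]; simp
      _ = (1 + n) * ∑ k ∈ (Finset.Icc 1 x).image (fun k => k + i),
            E.indicator (fun m : ℕ => (m : ℝ)⁻¹) k := by
          rw [Finset.sum_image (by intro a _ b _ h; simpa using h), Finset.mul_sum]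
      _ ≤ _ := by
          refine mul_le_mul_of_nonneg_left ?_ (by positivity)
          apply Finset.sum_le_sum_of_subset_of_nonneg
          · intro k hk
            simp only [Finset.mem_image, Finset.mem_Icc] at hk ⊢
            omega
          · intro k _ _
            exact indicator_nonneg (by intros; positivity) _
  refine ⟨p * N, ?_⟩
  filter_upwards [hK, eventually_ge_atTop 1] with x hx hx1
  have h1 := TL_average p n N hp hpN AK hper x
  have h2 := hcov x
  have h3 := TL_le _ _ hsub x
  have hc0 : 0 ≤ 1 - (n:ℝ) / p := by
    rw [sub_nonneg, div_le_one hppos]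
    exact_mod_cast hpn.le
  have h4 : (1 - (n:ℝ) / p) * TL AK x ≤ TL (AK ∩ G) x + p * N := by
    have : ((p:ℝ) - n) = p * (1 - (n:ℝ) / p) := by field_simp
    rw [this, mul_assoc, ← mul_add] at h1
    exact le_of_mul_le_mul_left h1 hppos
  have h5 := mul_le_mul_of_nonneg_left h3 hc0
  have h6 : n * ((1 + n) * ∑ k ∈ Finset.Icc 1 (x + n), E.indicator (fun m : ℕ => (m : ℝ)⁻¹) k)
      ≤ ε * Real.log x := by
    have hl : 0 ≤ Real.log x := Real.log_natCast_nonneg x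
    calc _ ≤ n * ((1 + n) * (ε / (n * (1 + n) + 1) * Real.log x)) := by gcongr
      _ = (n * (1 + n)) / (n * (1 + n) + 1) * (ε * Real.log x) := by ring
      _ ≤ 1 * (ε * Real.log x) := by
        gcongr
        rw [div_le_one (by positivity)]
        linarith
      _ = _ := one_mul _
  linarith

lemma logWeight_eq_s13 (A : Set ℤ) (x : ℕ) : logWeight A x = (Real.log x)⁻¹ * TL A x := rfl

lemma logWeight_nonneg_s13 (A : Set ℤ) (x : ℕ) : 0 ≤ logWeight A x := by
  rw [logWeight_eq_s13, TL_eq]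
  refine mul_nonneg (inv_nonneg.mpr (Real.log_natCast_nonneg x)) (Finset.sum_nonneg fun k _ => ?_)
  exact mul_nonneg (indicator_nonneg (by simp) _) (by positivity)

lemma logWeight_bdd (A : Set ℤ) : ∀ᶠ x in atTop, logWeight A x ≤ 2 := by
  have hlog : Tendsto (fun x : ℕ => Real.log x) atTop atTop :=
    Real.tendsto_log_atTop.comp tendsto_natCast_atTop_atTop
  filter_upwards [hlog.eventually_ge_atTop 1] with x hx
  rw [logWeight_eq_s13, inv_mul_le_iff₀ (by linarith)]
  have h1 := TL_le A univ (subset_univ _) x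
  have h2 := harmonic_le_one_add_log x
  have h3 : TL univ x = (harmonic x : ℝ) := by
    rw [TL, harmonic_eq_sum_Icc]
    simp
  linarith

lemma one_prime (β r n : ℕ) (hβ : 0 < β) (C : Set ℕ) (p : ℕ) (hp : p.Prime) (hpn : n < p)
    (hpβ : Nat.Coprime p β) :
    (1 - (n:ℝ) / p) * logDensLow (setA β r n (C \ natMultiples {p}))
        ≤ logDensLow (setA β r n C) := by
  set A := setA β r n (C \ natMultiples {p})
  set A' := setA β r n C
  set q := 1 - (n:ℝ) / p with hq
  have hppos : (0:ℝ) < p := by exact_mod_cast hp.pos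
  have hc0 : 0 ≤ q := by
    rw [hq, sub_nonneg, div_le_one hppos]
    exact_mod_cast hpn.le
  have hlog : Tendsto (fun x : ℕ => Real.log x) atTop atTop :=
    Real.tendsto_log_atTop.comp tendsto_natCast_atTop_atTop
  have hlow : ∀ B : Set ℤ, IsBoundedUnder (· ≥ ·) atTop (logWeight B) := fun B =>
    ⟨0, eventually_map.mpr (Eventually.of_forall (logWeight_nonneg_s13 B))⟩
  have hco : ∀ B : Set ℤ, IsCoboundedUnder (· ≥ ·) atTop (logWeight B) := fun B =>
    IsBoundedUnder.isCoboundedUnder_ge ⟨2, eventually_map.mpr (logWeight_bdd B)⟩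
  apply le_of_forall_pos_le_add
  intro ε hε
  obtain ⟨c, hc⟩ := one_prime_TL β r n hβ C p hp hpn hpβ (ε / 3) (by linarith)
  rw [← sub_le_iff_le_add]
  apply le_liminf_of_le (hco _)
  have hA : ∀ᶠ x in atTop, logDensLow A - ε / 3 < logWeight A x :=
    eventually_lt_of_lt_liminf (show logDensLow A - ε / 3 < liminf (logWeight A) atTop by
      change _ < logDensLow A; linarith) (hlow A)
  filter_upwards [hc, hA, hlog.eventually_ge_atTop 1, hlog.eventually_ge_atTop (3 * c / ε)]
    with x h1 h2 h3 h4
  have hl : 0 < Real.log x := by linarith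
  have hTA : TL A x = Real.log x * logWeight A x := by rw [logWeight_eq_s13]; field_simp
  have hTA' : TL A' x = Real.log x * logWeight A' x := by rw [logWeight_eq_s13]; field_simp
  rw [div_le_iff₀ hε] at h4
  have h5 : Real.log x * (q * logWeight A x) ≤ Real.log x * (logWeight A' x + 2 * ε / 3) := by
    rw [hTA, hTA'] at h1
    linarith
  have h6 := le_of_mul_le_mul_left h5 hl
  have hq1 : q ≤ 1 := by
    have : 0 ≤ (n:ℝ) / p := by positivity
    linarith
  have h7 := mul_le_mul_of_nonneg_left h2.le hc0
  have h8 : q * (ε / 3) ≤ ε / 3 := by nlinarith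
  linarith

lemma all_primes (β r n : ℕ) (hβ : 0 < β) (P : Finset ℕ) (hP : ∀ p ∈ P, p.Prime)
    (hPn : ∀ p ∈ P, n < p) (hPβ : ∀ p ∈ P, Nat.Coprime p β) (C : Set ℕ) :
    (∏ p ∈ P, (1 - (n : ℝ) / p)) * logDensLow (setA β r n (C \ natMultiples ↑P))
      ≤ logDensLow (setA β r n C) := by
  induction P using Finset.induction_on generalizing C with
  | empty => simp [natMultiples]
  | insert p P hpP ih =>
    have ih' := ih (fun q hq => hP q (Finset.mem_insert_of_mem hq))
      (fun q hq => hPn q (Finset.mem_insert_of_mem hq))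
      (fun q hq => hPβ q (Finset.mem_insert_of_mem hq)) C
    have h1 := one_prime β r n hβ (C \ natMultiples ↑P) p (hP p (Finset.mem_insert_self _ _))
      (hPn p (Finset.mem_insert_self _ _)) (hPβ p (Finset.mem_insert_self _ _))
    have e : (C \ natMultiples ↑P) \ natMultiples {p} = C \ natMultiples ↑(insert p P) := by
      ext c
      simp [natMultiples]
      tauto
    rw [e] at h1
    have h0 : 0 ≤ ∏ q ∈ P, (1 - (n : ℝ) / q) := by
      apply Finset.prod_nonneg
      intro q hq
      have hq' := Finset.mem_insert_of_mem (b := p) hq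
      rw [sub_nonneg, div_le_one (by exact_mod_cast (hP q hq').pos)]
      exact_mod_cast (hPn q hq').le
    rw [Finset.prod_insert hpP]
    have := mul_le_mul_of_nonneg_left h1 h0
    linarith

/-- Lower logarithmic density estimate: removing the multiples of finitely many large
primes `p ∈ P` coprime to `β` only costs a factor `∏_{p ∈ P} (1 − n/p)`. -/
theorem logDensLow_remove_large_primes (β r n : ℕ) (hβ : 0 < β) (hr : 0 < r) (hn : 0 < n)
    (C : Set ℕ) (P : Finset ℕ) (hP : ∀ p ∈ P, p.Prime) (hPn : ∀ p ∈ P, n < p)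
    (hPβ : ∀ p ∈ P, Nat.Coprime p β) :
    logDensLow ({m : ℤ | ∃ k : ℤ, m = (β : ℤ) * k + r} ∩
        ⋂ i ∈ Finset.Icc 1 n, {m : ℤ | m + (i : ℤ) ∈ freeZ C}) ≥
      (∏ p ∈ P, (1 - (n : ℝ) / p)) *
        logDensLow ({m : ℤ | ∃ k : ℤ, m = (β : ℤ) * k + r} ∩
          ⋂ i ∈ Finset.Icc 1 n, {m : ℤ | m + (i : ℤ) ∈ freeZ (C \ natMultiples ↑P)}) := by
  exact all_primes β r n hβ P hP hPn hPβ C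
end
end
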